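/- For every natural number n ≥ 1 and every complex number z with Re z > n, Kurepa's function satisfies K(z) = K(z − n) + (Q_n(z) − 1) · Γ(z + 1), where Q_n(z) = 1 + Σ_{j=0}^{n−1} Π_{i=0}^{j} 1/(z − i) and Γ is the complex Gamma function. -/

import Mathlib

open MeasureTheory Set

/-- Kurepa's function `K(z) = ∫₀^∞ e^{-t} (t^z - 1)/(t - 1) dt`,
where `t^z = exp(z log t)` for `t > 0`. -/
noncomputable def kurepa (z : ℂ) : ℂ :=
  ∫ t in Ioi (0 : ℝ), (Real.exp (-t) : ℂ) * (((t : ℂ) ^ z - 1) / ((t : ℂ) - 1))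

/-- The rational function `Q n z = 1 + ∑_{j=0}^{n-1} ∏_{i=0}^{j} 1/(z-i)`. -/
noncomputable def kurepaQ (n : ℕ) (z : ℂ) : ℂ :=
  1 + ∑ j ∈ Finset.range n, ∏ i ∈ Finset.range (j + 1), (1 / (z - (i : ℂ)))

lemma kurepa_integrable (w : ℂ) (hw : 0 < w.re) :
    IntegrableOn (fun t : ℝ => (Real.exp (-t) : ℂ) * (((t : ℂ) ^ w - 1) / ((t : ℂ) - 1)))
      (Ioi 0) := by
  have hc : ContinuousOn (dslope (fun t : ℝ => (t : ℂ) ^ w) 1) (Icc (1/2) (3/2)) := by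
    rw [continuousOn_dslope (Icc_mem_nhds (by norm_num) (by norm_num))]
    constructor
    · intro t ht
      have : 0 < t := by linarith [ht.1]
      exact (Complex.continuousAt_ofReal_cpow_const t w (Or.inr this.ne')).continuousWithinAt
    · have := (hasDerivAt_id (1 : ℂ)).cpow_const (c := w) (by simp)
      exact (HasDerivAt.comp_ofReal (z := (1 : ℝ)) (by simpa using this)).differentiableAt
  obtain ⟨C, hC⟩ := isCompact_Icc.exists_bound_of_continuousOn hc
  have hC0 : 0 ≤ C := le_trans (norm_nonneg _) (hC 1 (by norm_num))
  have h1 : IntegrableOn (fun t : ℝ => Real.exp (-t) * t ^ w.re) (Ioi 0) := by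
    simpa using Real.GammaIntegral_convergent (s := w.re + 1) (by linarith)
  have h2 : IntegrableOn (fun t : ℝ => Real.exp (-t)) (Ioi 0) := by
    simpa using Real.GammaIntegral_convergent (s := 1) (by norm_num)
  have hb : IntegrableOn (fun t : ℝ => 2 * (Real.exp (-t) * t ^ w.re) + (C + 2) * Real.exp (-t))
      (Ioi 0) := (h1.const_mul 2).add (h2.const_mul (C + 2))
  refine Integrable.mono' hb ?_ ?_
  · refine Measurable.aestronglyMeasurable ?_
    fun_prop
  · refine (ae_restrict_iff' measurableSet_Ioi).2 (Filter.Eventually.of_forall ?_)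
    intro t ht
    have ht0 : 0 < t := ht
    have he : 0 < Real.exp (-t) := Real.exp_pos _
    have hp : 0 < t ^ w.re := Real.rpow_pos_of_pos ht0 _
    rw [norm_mul, Complex.norm_real, Real.norm_of_nonneg he.le]
    have key : ‖((t : ℂ) ^ w - 1) / ((t : ℂ) - 1)‖ ≤ 2 * t ^ w.re + (C + 2) := by
      by_cases h1 : t = 1
      · subst h1
        simp
        linarith
      by_cases hm : t ∈ Icc (1/2 : ℝ) (3/2)
      · have := hC t hm
        rw [dslope_of_ne _ h1, slope_def_module] at this
        have e : ((t : ℂ) ^ w - 1) / ((t : ℂ) - 1)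
            = (t - 1)⁻¹ • ((t : ℂ) ^ w - ((1 : ℝ) : ℂ) ^ w) := by
          simp [div_eq_inv_mul]
        rw [e]
        linarith
      · have hd : 1/2 ≤ ‖(t : ℂ) - 1‖ := by
          rw [← Complex.ofReal_one, ← Complex.ofReal_sub, Complex.norm_real, Real.norm_eq_abs]
          by_contra! h
          rw [abs_lt] at h
          exact hm ⟨by linarith, by linarith⟩
        have hn : ‖(t : ℂ) ^ w - 1‖ ≤ t ^ w.re + 1 := by
          refine (norm_sub_le _ _).trans ?_
          rw [Complex.norm_cpow_eq_rpow_re_of_pos ht0, norm_one]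
        rw [norm_div, div_le_iff₀ (by linarith)]
        nlinarith
    nlinarith [mul_le_mul_of_nonneg_left key he.le]

lemma kurepa_step (w : ℂ) (hw : 0 < w.re) :
    kurepa (w + 1) = kurepa w + Complex.Gamma (w + 1) := by
  have hG : IntegrableOn (fun t : ℝ => ((-t).exp : ℂ) * (t : ℂ) ^ (w + 1 - 1)) (Ioi 0) :=
    Complex.GammaIntegral_convergent (s := w + 1) (by simp; linarith)
  rw [Complex.Gamma_eq_integral (by simp; linarith), Complex.GammaIntegral]
  unfold kurepa
  rw [← integral_add (kurepa_integrable w hw) hG]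
  refine integral_congr_ae ?_
  have h1 : ∀ᵐ t : ℝ ∂(volume.restrict (Ioi 0)), t ≠ 1 := by
    refine ae_restrict_of_ae ?_
    exact Measure.ae_ne volume 1
  filter_upwards [h1, ae_restrict_mem measurableSet_Ioi] with t ht ht0
  have ht0' : (t : ℂ) ≠ 0 := by
    have : (0 : ℝ) < t := ht0
    exact_mod_cast this.ne'
  have ht' : (t : ℂ) - 1 ≠ 0 := by
    rw [sub_ne_zero]
    exact_mod_cast ht
  simp only [add_sub_cancel_right]
  rw [Complex.cpow_add _ _ ht0', Complex.cpow_one, ← mul_add]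
  congr 1
  field_simp
  ring

lemma kurepa_prod (z : ℂ) (j : ℕ) (hz : (j : ℝ) < z.re) :
    (∏ i ∈ Finset.range (j + 1), (1 / (z - (i : ℂ)))) * Complex.Gamma (z + 1)
      = Complex.Gamma (z - j) := by
  have hne : ∀ k : ℕ, k ≤ j → z - (k : ℂ) ≠ 0 := by
    intro k hk h
    have := congrArg Complex.re h
    have hk' : (k : ℝ) ≤ j := by exact_mod_cast hk
    simp at this
    linarith
  induction j with
  | zero =>
    have := hne 0 le_rfl
    simp at this
    simp [Complex.Gamma_add_one z this, this]
  | succ j ih =>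
    have h0 := hne (j + 1) le_rfl
    have := ih (by push_cast at hz; linarith) (fun k hk => hne k (by omega))
    rw [Finset.prod_range_succ, mul_right_comm, this]
    have e : z - (j : ℂ) = (z - ((j + 1 : ℕ) : ℂ)) + 1 := by push_cast; ring
    rw [e, Complex.Gamma_add_one _ h0]
    field_simp

/-- For `n ≥ 1` and `Re z > n`, Kurepa's function satisfies
`K(z) = K(z - n) + (Q_n(z) - 1) Γ(z + 1)`. -/
theorem kurepa_eq_kurepa_sub_nat_add_Q_mul_Gamma
    (n : ℕ) (hn : 1 ≤ n) (z : ℂ) (hz : (n : ℝ) < z.re) :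
    kurepa z = kurepa (z - n) + (kurepaQ n z - 1) * Complex.Gamma (z + 1) := by
  clear hn
  unfold kurepaQ
  induction n with
  | zero => simp
  | succ n ih =>
    push_cast at hz
    have h1 := ih (by linarith)
    have h2 := kurepa_prod z n (by linarith)
    have h3 := kurepa_step (z - ((n + 1 : ℕ) : ℂ)) (by simp; linarith)
    have e : z - ((n + 1 : ℕ) : ℂ) + 1 = z - (n : ℂ) := by push_cast; ring
    rw [e] at h3
    rw [Finset.sum_range_succ]
    rw [h1, h3, ← h2]
    ring
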